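/- arXiv:1812.11370 — 2 statements merged into one kernel-verified Lean document; each statement's English description precedes it below -/
import Mathlib

section
/- Let a ∈ ℤ, let n be a positive integer and n-1 < α < n, let λ be a real number with |λ| < 1, and let b₀, …, b_{n-1} ∈ ℝ. Define y(k) = ∑_{κ=0}^{n-1} b_κ · F_{α,κ+1}(λ,k,a) for k ≥ a+1, and y(k) = ∑_{κ=0}^{n-1} b_κ · ∏_{i=0}^{κ-1}(k-a+i)/κ! for k ≤ a (empty product equal to 1). Then y satisfies the initial conditions ∇^κ y(a) = b_κ for κ = 0, 1, …, n-1, and the zero-input nabla fractional difference equation ₐ∇ₖ^α y(k) = λ·y(k) for every k ∈ ℕ_{a+1}. -/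
/-!
The proof works with generating functions in the variable `x`, a function on `ℕ_{a+1}` being encoded
as `∑_l f(a + l + 1) x^l`. Then `F_{α,β}` corresponds to `∑_j λ^j (1 - x)^{-(jα+β)}` (`discML_eq`), the
`γ`-th nabla sum to multiplication by `(1 - x)^{-γ}` (`nsum_eq_coeff`), and `∇ⁿ` to multiplication by
`(1 - x)^n`, provided the function vanishes for `k ≤ a` (`bdiff_eq_coeff`).

Write `y = P + Q`, where `P` is the polynomial `∑_κ b_κ (k-a)(k-a+1)⋯(k-a+κ-1)/κ!` on all of `ℤ`. It is
the `j = 0` part of the Mittag–Leffler sums on `ℕ_{a+1}` (`mcoef_symm`), so `Q` is the part `j ≥ 1` and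
vanishes for `k ≤ a`. Backward differences lower the degree of each basis polynomial by one
(`sum_choose_mcoef`); this gives the initial conditions and `∇ⁿ P = 0`. Therefore the Caputo difference
of `y` has generating function `(1 - x)^{-(n-α)} (1 - x)^n Q = (1 - x)^α Q`, and multiplication by
`(1 - x)^α` shifts `j` to `j - 1` in the sum for `Q`, which yields `λ y`.
-/

/-- The rising function `p^{q̄} = Γ(p+q)/Γ(p)`. -/
noncomputable def rise (p : ℤ) (q : ℝ) : ℝ :=
  Real.Gamma ((p : ℝ) + q) / Real.Gamma (p : ℝ)

/-- The discrete Mittag–Leffler function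
`F_{α,β}(λ,k,a) = ∑_{j=0}^∞ λ^j (k-a)^{\overline{jα+β-1}}/Γ(jα+β)`. -/
noncomputable def discML (α β lam : ℝ) (k a : ℤ) : ℝ :=
  ∑' j : ℕ, lam ^ j * rise (k - a) ((j : ℝ) * α + β - 1) / Real.Gamma ((j : ℝ) * α + β)

/-- The `n`-th backward difference `∇ⁿ f(k) = ∑_{j=0}^n (-1)^j C(n,j) f(k-j)`. -/
noncomputable def bdiff (n : ℕ) (f : ℤ → ℝ) (k : ℤ) : ℝ :=
  ∑ j ∈ Finset.range (n + 1), (-1 : ℝ) ^ j * (n.choose j : ℝ) * f (k - j)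

/-- The `γ`-th nabla fractional sum
`ₐ∇ₖ^{-γ} f(k) = ∑_{j=0}^{k-a-1} (Γ(j+γ)/(Γ(γ)Γ(j+1))) f(k-j)`. -/
noncomputable def nsum (a : ℤ) (γ : ℝ) (f : ℤ → ℝ) (k : ℤ) : ℝ :=
  ∑ j ∈ Finset.range (k - a).toNat,
    (Real.Gamma ((j : ℝ) + γ) / (Real.Gamma γ * Real.Gamma ((j : ℝ) + 1))) * f (k - j)

/-- The nabla Caputo fractional difference
`ₐ∇ₖ^α f(k) = ₐ∇ₖ^{-(n-α)}(∇ⁿ f)(k)` for `n-1 < α < n`. -/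
noncomputable def caputo (a : ℤ) (α : ℝ) (n : ℕ) (f : ℤ → ℝ) (k : ℤ) : ℝ :=
  nsum a ((n : ℝ) - α) (bdiff n f) k

open PowerSeries Finset

/-- The coefficient `r (r + 1) ⋯ (r + i - 1) / i!` of `x ^ i` in `(1 - x) ^ (-r)`, for any real
`r`. -/
noncomputable def mcoef (r : ℝ) (i : ℕ) : ℝ :=
  (∏ t ∈ range i, (r + (t : ℝ))) / (i.factorial : ℝ)

/-- The power series of `(1 - x) ^ (-r)`. -/
noncomputable def negBinom (r : ℝ) : PowerSeries ℝ := PowerSeries.mk (mcoef r)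

lemma coeff_negBinom (r : ℝ) (i : ℕ) : coeff i (negBinom r) = mcoef r i := by
  simp [negBinom]

lemma negBinom_eq_rescale (r : ℝ) :
    negBinom r = rescale (-1 : ℝ) (binomialSeries ℝ (-r)) := by
  ext i
  have h1 : (∏ t ∈ range i, (r + (t : ℝ))) = (ascPochhammer ℝ i).eval r := by
    induction i with
    | zero => simp
    | succ i ih => rw [prod_range_succ, ih, ascPochhammer_succ_eval]
  have h2 := Ring.factorial_nsmul_multichoose_eq_ascPochhammer r i
  rw [Polynomial.ascPochhammer_smeval_eq_eval, nsmul_eq_mul] at h2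
  have h3 : (i.factorial : ℝ) ≠ 0 := by positivity
  rw [coeff_negBinom, mcoef, h1, ← h2, mul_div_cancel_left₀ _ h3, coeff_rescale,
    binomialSeries_coeff, Ring.choose_neg, Ring.multichoose_eq, smul_eq_mul, mul_one,
    Units.smul_def, zsmul_eq_mul, Int.cast_negOnePow_natCast, ← mul_assoc, ← mul_pow]
  simp

lemma negBinom_add (r s : ℝ) : negBinom (r + s) = negBinom r * negBinom s := by
  simp only [negBinom_eq_rescale, neg_add, binomialSeries_add, map_mul]

lemma negBinom_neg_natCast (n : ℕ) : negBinom (-(n : ℝ)) = (1 - X) ^ n := by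
  rw [negBinom_eq_rescale, neg_neg, binomialSeries_nat]
  simp [sub_eq_add_neg]

lemma mcoef_neg_natCast (n j : ℕ) :
    mcoef (-(n : ℝ)) j = (-1 : ℝ) ^ j * (n.choose j : ℝ) := by
  rw [← coeff_negBinom, negBinom_eq_rescale, neg_neg, coeff_rescale, binomialSeries_coeff,
    Ring.choose_natCast]
  simp

lemma mcoef_zero_left (i : ℕ) : mcoef 0 i = if i = 0 then 1 else 0 := by
  have := mcoef_neg_natCast 0 i
  cases i <;> simp_all

/-- For `r > 0` the coefficients are the Gamma quotients that serve both as the weights of the nabla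
fractional sum and as the terms of the discrete Mittag–Leffler function. -/
lemma mcoef_eq_Gamma {r : ℝ} (hr : 0 < r) (i : ℕ) :
    mcoef r i = Real.Gamma (i + r) / (Real.Gamma r * Real.Gamma (i + 1)) := by
  rw [Real.Gamma_nat_eq_factorial, mcoef]
  have hG : Real.Gamma r ≠ 0 := (Real.Gamma_pos_of_pos hr).ne'
  have key : Real.Gamma (i + r) = Real.Gamma r * ∏ t ∈ range i, (r + (t : ℝ)) := by
    induction i with
    | zero => simp
    | succ i ih =>
      have h : (i : ℝ) + r ≠ 0 := by positivity
      rw [prod_range_succ, Nat.cast_succ, add_right_comm, Real.Gamma_add_one h, ih]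
      ring
  rw [key, mul_div_mul_left _ _ hG]

/-- Both sides are `C(κ + l, l)`. Hence, at `k = a + l + 1`, the degree-`κ` polynomial that defines the
solution for `k ≤ a` equals the zeroth term of `F_{α,κ+1}`. -/
lemma mcoef_symm (κ l : ℕ) : mcoef ((l : ℝ) + 1) κ = mcoef ((κ : ℝ) + 1) l := by
  rw [mcoef_eq_Gamma (by positivity), mcoef_eq_Gamma (by positivity)]
  rw [mul_comm, show (κ : ℝ) + (l + 1) = l + (κ + 1) by ring]

/-- The `n`-th backward difference of `m ↦ mcoef m i` lowers the degree `i` by `n`. In generating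
functions this is `(1 - (1 - x)) ^ n = x ^ n`. -/
lemma sum_choose_mcoef (n i : ℕ) (m : ℝ) :
    ∑ j ∈ range (n + 1), (-1 : ℝ) ^ j * (n.choose j : ℝ) * mcoef (m - j) i =
      if n ≤ i then mcoef m (i - n) else 0 := by
  have h : ∑ j ∈ range (n + 1), C ((-1 : ℝ) ^ j * (n.choose j : ℝ)) * negBinom (m - j) =
      X ^ n * negBinom m := by
    have hX : (X : PowerSeries ℝ) ^ n = (-(1 - X) + 1) ^ n := by congr 1; ring
    rw [hX, add_pow, sum_mul]
    refine sum_congr rfl fun j _ => ?_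
    rw [sub_eq_add_neg m, negBinom_add, negBinom_neg_natCast, neg_pow (1 - X : PowerSeries ℝ)]
    simp only [map_mul, map_pow, map_neg, map_one, map_natCast]
    ring
  have hcoeff := congrArg (coeff i) h
  simpa only [map_sum, coeff_C_mul, coeff_negBinom, coeff_X_pow_mul'] using hcoeff

/-- The coefficient is a polynomial in `j`, so the geometric factor dominates. -/
lemma summable_mcoef {lam : ℝ} (hlam : |lam| < 1) (α β : ℝ) (l : ℕ) :
    Summable fun j : ℕ => lam ^ j * mcoef ((j : ℝ) * α + β) l := by
  obtain ⟨p, hp⟩ : ∃ p : Polynomial ℝ, ∀ x : ℝ, mcoef (x * α + β) l = p.eval x := by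
    refine ⟨Polynomial.C ((l.factorial : ℝ)⁻¹) *
      ∏ t ∈ range l, (Polynomial.C α * Polynomial.X + Polynomial.C (β + t)), fun x => ?_⟩
    simp [mcoef, Polynomial.eval_prod, div_eq_inv_mul, add_assoc, mul_comm α]
  simp only [hp, Polynomial.eval_eq_sum_range, mul_sum]
  refine summable_sum fun i _ => ?_
  refine ((summable_pow_mul_geometric_of_norm_lt_one i (r := lam) hlam).mul_left
    (p.coeff i)).congr fun j => ?_
  ring

/-- The power series `∑_j λ^j (1 - x) ^ (-(jα + β))`, the generating function of
`l ↦ F_{α,β}(λ, a + l + 1, a)`; each coefficient converges when `|λ| < 1`. -/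
noncomputable def mlSeries (α β lam : ℝ) : PowerSeries ℝ :=
  PowerSeries.mk fun l => ∑' j : ℕ, lam ^ j * mcoef ((j : ℝ) * α + β) l

lemma discML_eq {α β lam : ℝ} (hα : 0 < α) (hβ : 0 < β) (a : ℤ) (l : ℕ) :
    discML α β lam (a + l + 1) a = coeff l (mlSeries α β lam) := by
  rw [mlSeries, coeff_mk, discML]
  refine tsum_congr fun j => ?_
  rw [mcoef_eq_Gamma (by positivity), rise, mul_div_assoc, div_div,
    show a + l + 1 - a = (l : ℤ) + 1 by ring, mul_comm (Real.Gamma _) (Real.Gamma _)]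
  push_cast
  rw [show (l : ℝ) + 1 + (j * α + β - 1) = l + (j * α + β) by ring]

lemma negBinom_mul_mlSeries {lam : ℝ} (hlam : |lam| < 1) (α β γ : ℝ) :
    negBinom γ * mlSeries α β lam = mlSeries α (γ + β) lam := by
  ext N
  rw [coeff_mul]
  simp only [mlSeries, coeff_mk, coeff_negBinom]
  have h : HasSum (fun j : ℕ => ∑ p ∈ antidiagonal N,
      mcoef γ p.1 * (lam ^ j * mcoef ((j : ℝ) * α + β) p.2))
      (∑ p ∈ antidiagonal N, mcoef γ p.1 * ∑' j : ℕ, lam ^ j * mcoef ((j : ℝ) * α + β) p.2) :=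
    hasSum_sum fun p _ => (summable_mcoef hlam α β p.2).hasSum.mul_left _
  rw [← h.tsum_eq]
  refine tsum_congr fun j => ?_
  rw [show (j : ℝ) * α + (γ + β) = γ + (j * α + β) by ring, ← coeff_negBinom _ N,
    negBinom_add, coeff_mul, mul_sum]
  refine sum_congr rfl fun p _ => ?_
  simp only [coeff_negBinom]
  ring

/-- Splitting off the term `j = 0`. -/
lemma mlSeries_eq {lam : ℝ} (hlam : |lam| < 1) (α β : ℝ) :
    mlSeries α β lam = negBinom β + C lam * mlSeries α (α + β) lam := by
  ext l
  simp only [mlSeries, map_add, coeff_C_mul, coeff_mk, coeff_negBinom]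
  rw [(summable_mcoef hlam α β l).tsum_eq_zero_add, ← tsum_mul_left]
  congr 1
  · simp
  · refine tsum_congr fun j => ?_
    push_cast
    rw [show ((j : ℝ) + 1) * α + β = j * α + (α + β) by ring]
    ring

/-- On functions vanishing up to `a`, `∇ⁿ` is multiplication of the generating function by
`(1 - x) ^ n`. -/
lemma bdiff_eq_coeff (n : ℕ) (a : ℤ) (q : ℤ → ℝ) (hq : ∀ k ≤ a, q k = 0) (m : ℕ) :
    bdiff n q (a + m + 1) =
      coeff m (negBinom (-(n : ℝ)) * PowerSeries.mk fun l : ℕ => q (a + l + 1)) := by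
  rw [coeff_mul, Nat.sum_antidiagonal_eq_sum_range_succ_mk, bdiff]
  simp only [coeff_negBinom, coeff_mk, mcoef_neg_natCast]
  -- both sums extend to `range (n + m + 1)`: binomials vanish past `n`, and `q` vanishes past `m`
  have h1 : ∑ j ∈ range (n + 1), (-1 : ℝ) ^ j * (n.choose j : ℝ) * q (a + m + 1 - j) =
      ∑ j ∈ range (n + m + 1), (-1 : ℝ) ^ j * (n.choose j : ℝ) * q (a + m + 1 - j) := by
    refine sum_subset (range_subset_range.2 (by lia)) fun j _ hj => ?_
    rw [Nat.choose_eq_zero_of_lt (by simpa using hj)]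
    simp
  have h2 : ∑ j ∈ range (m + 1), (-1 : ℝ) ^ j * (n.choose j : ℝ) * q (a + m + 1 - j) =
      ∑ j ∈ range (n + m + 1), (-1 : ℝ) ^ j * (n.choose j : ℝ) * q (a + m + 1 - j) := by
    refine sum_subset (range_subset_range.2 (by lia)) fun j _ hj => ?_
    rw [mem_range] at hj
    rw [hq _ (by lia), mul_zero]
  rw [h1, ← h2]
  refine sum_congr rfl fun j hj => ?_
  rw [mem_range] at hj
  congr 2
  push_cast [show j ≤ m by lia]
  ring

/-- The `γ`-th nabla sum is multiplication of the generating function by `(1 - x) ^ (-γ)`. -/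
lemma nsum_eq_coeff {γ : ℝ} (hγ : 0 < γ) (a : ℤ) (f : ℤ → ℝ) (N : ℕ) :
    nsum a γ f (a + N + 1) =
      coeff N (negBinom γ * PowerSeries.mk fun l : ℕ => f (a + l + 1)) := by
  rw [coeff_mul, Nat.sum_antidiagonal_eq_sum_range_succ_mk, nsum,
    show (a + N + 1 - a).toNat = N + 1 by lia]
  refine sum_congr rfl fun j hj => ?_
  rw [mem_range] at hj
  rw [coeff_negBinom, coeff_mk, mcoef_eq_Gamma hγ]
  congr 2
  push_cast [show j ≤ N by lia]
  ring

lemma bdiff_poly (n s : ℕ) (b : ℕ → ℝ) (a k : ℤ) :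
    bdiff s (fun k => ∑ κ ∈ range n, b κ * mcoef ((k : ℝ) - a) κ) k =
      ∑ κ ∈ range n, b κ * if s ≤ κ then mcoef ((k : ℝ) - a) (κ - s) else 0 := by
  simp only [bdiff, ← sum_choose_mcoef, mul_sum]
  rw [sum_comm]
  refine sum_congr rfl fun κ _ => sum_congr rfl fun j _ => ?_
  push_cast
  rw [sub_right_comm]
  ring

/-- zero-input response: for `n-1 < α < n`, `|λ| < 1` and reals
`b₀,…,b_{n-1}`, the function `y` given by
`y(k) = ∑_{κ=0}^{n-1} b_κ F_{α,κ+1}(λ,k,a)` for `k ≥ a+1` and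
`y(k) = ∑_{κ=0}^{n-1} b_κ ∏_{i=0}^{κ-1}(k-a+i)/κ!` for `k ≤ a`
satisfies the initial conditions `∇^κ y(a) = b_κ` (`κ = 0,…,n-1`) and
`ₐ∇ₖ^α y(k) = λ y(k)` for every `k ∈ ℕ_{a+1}`. -/
theorem zero_input_response (a : ℤ) (n : ℕ) (hn : 0 < n) (α : ℝ)
    (hα1 : (n : ℝ) - 1 < α) (hα2 : α < n) (lam : ℝ) (hlam : |lam| < 1)
    (b : ℕ → ℝ) (y : ℤ → ℝ)
    (hy1 : ∀ k : ℤ, a + 1 ≤ k →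
      y k = ∑ κ ∈ Finset.range n, b κ * discML α ((κ : ℝ) + 1) lam k a)
    (hy2 : ∀ k : ℤ, k ≤ a →
      y k = ∑ κ ∈ Finset.range n,
        b κ * ((∏ i ∈ Finset.range κ, ((k : ℝ) - (a : ℝ) + (i : ℝ))) / (Nat.factorial κ : ℝ))) :
    (∀ κ : ℕ, κ < n → bdiff κ y a = b κ) ∧
    (∀ k : ℤ, a + 1 ≤ k → caputo a α n y k = lam * y k) := by
  have hn1 : (1 : ℝ) ≤ n := by exact_mod_cast hn
  have hα : 0 < α := by linarith
  set P : ℤ → ℝ := fun k => ∑ κ ∈ range n, b κ * mcoef ((k : ℝ) - a) κ with hP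
  have hyP : ∀ k ≤ a, y k = P k := fun k hk => hy2 k hk
  refine ⟨fun κ hκ => ?_, fun k hk => ?_⟩
  · have h : bdiff κ y a = bdiff κ P a := by
      refine sum_congr rfl fun j _ => ?_
      rw [hyP _ (by lia)]
    rw [h, hP, bdiff_poly, sum_eq_single κ]
    · simp [mcoef_zero_left]
    · intro i _ hi
      simp only [sub_self, mcoef_zero_left]
      split_ifs <;> lia
    · intro h
      exact absurd (mem_range.2 hκ) h
  · obtain ⟨N, rfl⟩ : ∃ N : ℕ, k = a + N + 1 := ⟨(k - a - 1).toNat, by lia⟩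
    set Y : PowerSeries ℝ := ∑ κ ∈ range n, C (b κ) * mlSeries α ((κ : ℝ) + 1) lam with hY
    have hyY : ∀ l : ℕ, y (a + l + 1) = coeff l Y := fun l => by
      rw [hy1 _ (by lia), hY, map_sum]
      refine sum_congr rfl fun κ _ => ?_
      rw [discML_eq hα (by positivity), coeff_C_mul]
    -- the part of `y` with `j ≥ 1`, on `k ≥ a + 1`
    have hyQ : (PowerSeries.mk fun l : ℕ => (y - P) (a + l + 1)) =
        ∑ κ ∈ range n, C (b κ) * (C lam * mlSeries α (α + ((κ : ℝ) + 1)) lam) := by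
      ext l
      rw [coeff_mk, Pi.sub_apply, hyY, hY, hP, map_sum, map_sum, ← sum_sub_distrib]
      refine sum_congr rfl fun κ _ => ?_
      rw [mlSeries_eq hlam, coeff_C_mul, coeff_C_mul, map_add, coeff_negBinom, ← mcoef_symm]
      push_cast
      rw [show (a : ℝ) + l + 1 - a = l + 1 by ring]
      ring
    have hdiff : ∀ m : ℤ, bdiff n y m = bdiff n (y - P) m := fun m => by
      have h0 : bdiff n P m = 0 := by
        rw [hP, bdiff_poly]
        refine sum_eq_zero fun κ hκ => ?_
        rw [if_neg (by simpa using hκ), mul_zero]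
      rw [← sub_zero (bdiff n y m), ← h0]
      simp only [bdiff, Pi.sub_apply, mul_sub, sum_sub_distrib]
    have hser : (PowerSeries.mk fun l : ℕ => bdiff n y (a + l + 1)) =
        negBinom (-(n : ℝ)) * PowerSeries.mk fun l : ℕ => (y - P) (a + l + 1) := by
      ext m
      rw [coeff_mk, hdiff, bdiff_eq_coeff n a (y - P) fun k hk => by simp [hyP k hk]]
    rw [caputo, nsum_eq_coeff (sub_pos.2 hα2), hser, ← mul_assoc, ← negBinom_add,
      show (n : ℝ) - α + -n = -α by ring, hyQ, hyY, ← coeff_C_mul, hY, mul_sum, mul_sum]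
    congr 1
    refine sum_congr rfl fun κ _ => ?_
    rw [mul_left_comm, mul_left_comm _ (C lam), negBinom_mul_mlSeries hlam, neg_add_cancel_left]
    ring
end

section
/- Let a ∈ ℤ, α > 0, and let λ be a real number with 0 < λ < 1. Then the discrete Mittag–Leffler function diverges as k → ∞: F_{α,1}(λ,k,a) → +∞ as k → ∞ (k ranging over ℕ_{a+1}). -/
lemma rise_div_Gamma (n : ℕ) {x : ℝ} (hx : 0 ≤ x) :
    rise ((n : ℤ) + 1) x / Real.Gamma (x + 1) = ∏ i ∈ Finset.range n, (1 + x / ((i : ℝ) + 1)) := by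
  have hG : Real.Gamma (x + 1) ≠ 0 := (Real.Gamma_pos_of_pos (by linarith)).ne'
  induction n with
  | zero =>
    simp only [rise, Nat.cast_zero, zero_add, Int.cast_one, Real.Gamma_one, div_one,
      Finset.range_zero, Finset.prod_empty]
    rw [add_comm (1 : ℝ) x, div_self hG]
  | succ n ih =>
    rw [Finset.prod_range_succ, ← ih]
    have hn : (n : ℝ) + 1 ≠ 0 := by positivity
    have hGn : Real.Gamma ((n : ℝ) + 1) ≠ 0 := (Real.Gamma_pos_of_pos (by positivity)).ne'
    have h1 : Real.Gamma ((n : ℝ) + 1 + 1 + x) = (n + 1 + x) * Real.Gamma ((n : ℝ) + 1 + x) := by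
      rw [show (n : ℝ) + 1 + 1 + x = (n + 1 + x) + 1 by ring]
      exact Real.Gamma_add_one (by positivity)
    simp only [rise]
    push_cast
    rw [h1, Real.Gamma_add_one hn]
    field_simp

lemma summable_geometric_mul_prod {α lam : ℝ} (hα : 0 < α) (hlam0 : 0 < lam) (hlam1 : lam < 1)
    (n : ℕ) :
    Summable fun j : ℕ => lam ^ j * ∏ i ∈ Finset.range n, (1 + (j : ℝ) * α / ((i : ℝ) + 1)) := by
  have hs : Summable fun j : ℕ => (1 + α) ^ n * lam⁻¹ * (((j + 1 : ℕ) : ℝ) ^ n * lam ^ (j + 1)) :=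
    ((summable_nat_add_iff (f := fun j : ℕ => (j : ℝ) ^ n * lam ^ j) 1).2
      (summable_pow_mul_geometric_of_norm_lt_one n
        (by rwa [Real.norm_of_nonneg hlam0.le]))).mul_left _
  refine Summable.of_nonneg_of_le (fun j => ?_) (fun j => ?_) hs
  · exact mul_nonneg (pow_nonneg hlam0.le _) (Finset.prod_nonneg fun i _ => by positivity)
  have hprod : ∏ i ∈ Finset.range n, (1 + (j : ℝ) * α / ((i : ℝ) + 1))
      ≤ ((1 + α) * ((j : ℝ) + 1)) ^ n := by
    calc _ ≤ ∏ _i ∈ Finset.range n, ((1 + α) * ((j : ℝ) + 1)) := by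
          refine Finset.prod_le_prod (fun i _ => by positivity) fun i _ => ?_
          have h : (j : ℝ) * α / ((i : ℝ) + 1) ≤ j * α :=
            div_le_self (by positivity) (by linarith [(Nat.cast_nonneg i : (0 : ℝ) ≤ i)])
          have hj : (0 : ℝ) ≤ j := Nat.cast_nonneg j
          nlinarith
      _ = _ := by simp
  calc _ ≤ lam ^ j * ((1 + α) * ((j : ℝ) + 1)) ^ n := by gcongr
    _ = _ := by
      push_cast
      rw [mul_pow, pow_succ]
      field_simp

lemma sum_le_prod_one_add {α : ℝ} (hα : 0 < α) (n : ℕ) :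
    α * ∑ i ∈ Finset.range n, 1 / ((i : ℝ) + 1) + 1
      ≤ ∏ i ∈ Finset.range n, (1 + α / ((i : ℝ) + 1)) := by
  induction n with
  | zero => simp
  | succ n ih =>
    rw [Finset.prod_range_succ, Finset.sum_range_succ]
    have h0 : 0 ≤ ∑ i ∈ Finset.range n, 1 / ((i : ℝ) + 1) :=
      Finset.sum_nonneg fun i _ => by positivity
    have h1 : 0 ≤ α / ((n : ℝ) + 1) := by positivity
    have h2 : α * (1 / ((n : ℝ) + 1)) = α / ((n : ℝ) + 1) := by ring
    have h3 := mul_nonneg hα.le h0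
    nlinarith [mul_nonneg h3 h1]

/-- for `α > 0` and `0 < λ < 1`, the discrete Mittag–Leffler
function diverges: `F_{α,1}(λ,k,a) → +∞` as `k → ∞` over `ℕ_{a+1}`. -/
theorem discML_divergent (a : ℤ) (α : ℝ) (hα : 0 < α)
    (lam : ℝ) (hlam0 : 0 < lam) (hlam1 : lam < 1) :
    Filter.Tendsto (fun k : ℕ => discML α 1 lam (a + 1 + k) a)
      Filter.atTop Filter.atTop := by
  refine Filter.tendsto_atTop_mono (fun n => ?_)
    (Real.tendsto_sum_range_one_div_nat_succ_atTop.const_mul_atTop (mul_pos hlam0 hα))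
  have hF : discML α 1 lam (a + 1 + n) a = ∑' j : ℕ, lam ^ j *
      ∏ i ∈ Finset.range n, (1 + (j : ℝ) * α / ((i : ℝ) + 1)) := by
    refine tsum_congr fun j => ?_
    rw [← rise_div_Gamma n (by positivity : 0 ≤ (j : ℝ) * α), mul_div_assoc,
      show a + 1 + (n : ℤ) - a = n + 1 by ring, add_sub_cancel_right]
  have h1 := (summable_geometric_mul_prod hα hlam0 hlam1 n).le_tsum 1
    fun j _ => by positivity
  have h2 := mul_le_mul_of_nonneg_left (sum_le_prod_one_add hα n) hlam0.le
  rw [hF]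
  simp only [pow_one, Nat.cast_one, one_mul] at h1
  linarith
end
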